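/- Let n ≥ 2 and define the probability density f(y) = (1/B(1/2, (n−1)/2)) · n·e^{ny/2}/(1 + e^{ny})^{n/2} on ℝ. Then y ↦ y·f(y) is integrable and ∫_ℝ y·f(y) dy = −ωₙ, where ωₙ = (1/n)·(ψ((n−1)/2) − ψ(1/2)) and ψ(t) = d/dt log Γ(t) is the derivative of the logarithm of the Gamma function (the digamma function). -/

import Mathlib

/-!
The substitution `x = n y` turns the claim into one about the kernel
`K a b x = e^{a x} / (1 + e^x)^{a + b}` with `a = 1/2`, `b = (n - 1)/2`. Pulling back the Beta
integral along the sigmoid `x ↦ e^x / (1 + e^x)` shows that `K a b` is integrable with integral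
`B(a, b)` (`integrable_logisticKernel`, `integral_logisticKernel`).

Multiplying by `e^{t x}` moves the parameters to `(a + t, b - t)`, so the measure with density
`K a b` has moment generating function `t ↦ B(a + t, b - t)` for `-a < t < b`. Since `0` is
interior to this interval, the first moment exists and equals the derivative of the moment
generating function at `0`, which is `B(a, b) (ψ a - ψ b)` (`moment_logisticKernel`).
-/

open MeasureTheory Real

/-- The centered Logistic-Beta density
`f(y) = (1/B(1/2,(n-1)/2))·n·e^{ny/2}/(1+e^{ny})^{n/2}`, where
`B(a,b) = Γ(a)Γ(b)/Γ(a+b)`. -/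
noncomputable def logisticBetaDensity (n : ℕ) (y : ℝ) : ℝ :=
  (Real.Gamma ((n : ℝ) / 2) / (Real.Gamma (1 / 2) * Real.Gamma (((n : ℝ) - 1) / 2)))
    * ((n : ℝ) * Real.exp ((n : ℝ) * y / 2)
        / (1 + Real.exp ((n : ℝ) * y)) ^ ((n : ℝ) / 2))

/-- The digamma function `ψ`, realized as the derivative of `t ↦ log Γ(t)`. -/
noncomputable def digammaFn (t : ℝ) : ℝ := deriv (fun s => Real.log (Real.Gamma s)) t

lemma integrableOn_beta_integrand {a b : ℝ} (ha : 0 < a) (hb : 0 < b) :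
    IntegrableOn (fun x : ℝ => x ^ (a - 1) * (1 - x) ^ (b - 1)) (Set.Ioo 0 1) := by
  have h := Complex.betaIntegral_convergent (u := a) (v := b) (by simpa) (by simpa)
  rw [intervalIntegrable_iff_integrableOn_Ioo_of_le zero_le_one] at h
  refine h.re.congr ?_
  filter_upwards [ae_restrict_mem measurableSet_Ioo] with x hx
  have h1 : (0 : ℝ) ≤ 1 - x := by linarith [hx.2]
  have : (x : ℂ) ^ ((a : ℂ) - 1) * (1 - (x : ℂ)) ^ ((b : ℂ) - 1)
      = ((x ^ (a - 1) * (1 - x) ^ (b - 1) : ℝ) : ℂ) := by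
    rw [Complex.ofReal_mul, Complex.ofReal_cpow hx.1.le, Complex.ofReal_cpow h1]
    push_cast
    rfl
  simp only [this]
  exact Complex.ofReal_re _

open ProbabilityTheory in
lemma integral_beta_integrand {a b : ℝ} (ha : 0 < a) (hb : 0 < b) :
    ∫ x in Set.Ioo (0 : ℝ) 1, x ^ (a - 1) * (1 - x) ^ (b - 1) = beta a b := by
  have key : Complex.betaIntegral a b
      = ((∫ x in Set.Ioo (0 : ℝ) 1, x ^ (a - 1) * (1 - x) ^ (b - 1) : ℝ) : ℂ) := by
    rw [Complex.betaIntegral, intervalIntegral.integral_of_le zero_le_one,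
      integral_Ioc_eq_integral_Ioo, ← integral_complex_ofReal]
    refine setIntegral_congr_fun measurableSet_Ioo fun x hx => ?_
    have h1 : (0 : ℝ) ≤ 1 - x := by linarith [hx.2]
    simp only [Complex.ofReal_mul, Complex.ofReal_cpow hx.1.le, Complex.ofReal_cpow h1]
    push_cast
    rfl
  rw [beta_eq_betaIntegralReal a b ha hb, key, Complex.ofReal_re]

/-- The unnormalized logistic-Beta kernel `e^{a x} / (1 + e^x)^{a + b}`. -/
noncomputable def logisticKernel (a b x : ℝ) : ℝ :=
  Real.exp (a * x) / (1 + Real.exp x) ^ (a + b)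

lemma logisticKernel_nonneg (a b x : ℝ) : 0 ≤ logisticKernel a b x := by
  unfold logisticKernel; positivity

lemma measurable_logisticKernel (a b : ℝ) : Measurable (logisticKernel a b) := by
  unfold logisticKernel; fun_prop

/-- Exponential tilting by `t` shifts the parameters to `(a + t, b - t)`. -/
lemma exp_mul_logisticKernel (a b t x : ℝ) :
    Real.exp (t * x) * logisticKernel a b x = logisticKernel (a + t) (b - t) x := by
  unfold logisticKernel
  rw [← mul_div_assoc, ← Real.exp_add]
  congr 2 <;> ring

/-- The kernel is the Beta integrand pulled back along the sigmoid, Jacobian included. -/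
lemma abs_deriv_sigmoid_smul_beta (a b x : ℝ) :
    |sigmoid x * (1 - sigmoid x)| • ((sigmoid x) ^ (a - 1) * (1 - sigmoid x) ^ (b - 1))
      = logisticKernel a b x := by
  have h0 : 0 < sigmoid x := sigmoid_pos x
  have h1 : 0 < 1 - sigmoid x := sub_pos.2 (sigmoid_lt_one x)
  have hE : 0 < 1 + Real.exp x := by positivity
  have hs : sigmoid x = Real.exp x / (1 + Real.exp x) := by
    rw [sigmoid_def, Real.exp_neg]
    field_simp
    ring
  have hs' : 1 - sigmoid x = 1 / (1 + Real.exp x) := by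
    rw [hs]; field_simp; ring
  rw [abs_of_pos (mul_pos h0 h1), smul_eq_mul, Real.rpow_sub_one h0.ne',
    Real.rpow_sub_one h1.ne']
  have : sigmoid x * (1 - sigmoid x) *
      (sigmoid x ^ a / sigmoid x * ((1 - sigmoid x) ^ b / (1 - sigmoid x)))
      = sigmoid x ^ a * (1 - sigmoid x) ^ b := by
    field_simp
  rw [this, hs', hs, Real.div_rpow (Real.exp_pos x).le hE.le, Real.div_rpow zero_le_one hE.le,
    Real.one_rpow, logisticKernel, Real.rpow_add hE, ← Real.exp_mul, mul_comm x a,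
    div_mul_div_comm, mul_one]

lemma integrable_logisticKernel {a b : ℝ} (ha : 0 < a) (hb : 0 < b) :
    Integrable (logisticKernel a b) := by
  have h := (integrableOn_image_iff_integrableOn_abs_deriv_smul MeasurableSet.univ
    (fun x _ => (hasDerivAt_sigmoid x).hasDerivWithinAt) sigmoid_injective.injOn
    (fun x : ℝ => x ^ (a - 1) * (1 - x) ^ (b - 1)))
  rw [Set.image_univ, range_sigmoid] at h
  have h2 := h.1 (integrableOn_beta_integrand ha hb)
  simpa only [abs_deriv_sigmoid_smul_beta, integrableOn_univ] using h2

lemma integral_logisticKernel {a b : ℝ} (ha : 0 < a) (hb : 0 < b) :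
    ∫ x, logisticKernel a b x = ProbabilityTheory.beta a b := by
  have h := (integral_image_eq_integral_abs_deriv_smul MeasurableSet.univ
    (fun x _ => (hasDerivAt_sigmoid x).hasDerivWithinAt) sigmoid_injective.injOn
    (fun x : ℝ => x ^ (a - 1) * (1 - x) ^ (b - 1)))
  rw [Set.image_univ, range_sigmoid, integral_beta_integrand ha hb] at h
  simpa only [abs_deriv_sigmoid_smul_beta, setIntegral_univ] using h.symm

lemma hasDerivAt_Gamma_digammaFn {a : ℝ} (ha : 0 < a) :
    HasDerivAt Real.Gamma (Real.Gamma a * digammaFn a) a := by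
  have hd : DifferentiableAt ℝ Real.Gamma a :=
    Real.differentiableAt_Gamma fun m => ((neg_nonpos.mpr m.cast_nonneg).trans_lt ha).ne'
  have hG := (Real.Gamma_pos_of_pos ha).ne'
  have : digammaFn a = deriv Real.Gamma a / Real.Gamma a := (hd.hasDerivAt.log hG).deriv
  rw [this, mul_div_cancel₀ _ hG]
  exact hd.hasDerivAt

open ProbabilityTheory in
lemma hasDerivAt_beta_shift {a b : ℝ} (ha : 0 < a) (hb : 0 < b) :
    HasDerivAt (fun t => beta (a + t) (b - t)) (beta a b * (digammaFn a - digammaFn b)) 0 := by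
  have h1 : HasDerivAt (fun t => Real.Gamma (a + t)) (Real.Gamma a * digammaFn a) 0 := by
    have := hasDerivAt_Gamma_digammaFn ha
    rw [← add_zero a] at this
    simpa using this.comp_const_add a 0
  have h2 : HasDerivAt (fun t => Real.Gamma (b - t)) (-(Real.Gamma b * digammaFn b)) 0 := by
    have := hasDerivAt_Gamma_digammaFn hb
    rw [← sub_zero b] at this
    simpa using this.comp_const_sub b 0
  have h3 := (h1.mul h2).div_const (Real.Gamma (a + b))
  convert! h3 using 1
  · funext t
    simp only [beta, Pi.mul_apply]
    congr 2; ring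
  · simp only [beta, add_zero, sub_zero]
    ring

open ProbabilityTheory in
/-- First moment of the kernel, as the derivative at `0` of its moment generating function. -/
lemma moment_logisticKernel {a b : ℝ} (ha : 0 < a) (hb : 0 < b) :
    Integrable (fun x => x * logisticKernel a b x) ∧
    ∫ x, x * logisticKernel a b x = beta a b * (digammaFn a - digammaFn b) := by
  set μ : Measure ℝ := volume.withDensity fun x => ENNReal.ofReal (logisticKernel a b x) with hμ
  have hm : Measurable fun x => ENNReal.ofReal (logisticKernel a b x) :=
    (measurable_logisticKernel a b).ennreal_ofReal
  have hlt : ∀ᵐ x : ℝ, ENNReal.ofReal (logisticKernel a b x) < ⊤ := by simp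
  have hdens (g : ℝ → ℝ) : Integrable g μ ↔ Integrable fun x => g x * logisticKernel a b x := by
    rw [hμ, integrable_withDensity_iff hm hlt]
    simp only [ENNReal.toReal_ofReal (logisticKernel_nonneg a b _)]
  have hval (g : ℝ → ℝ) : ∫ x, g x ∂μ = ∫ x, g x * logisticKernel a b x := by
    rw [hμ, integral_withDensity_eq_integral_toReal_smul hm hlt]
    simp only [ENNReal.toReal_ofReal (logisticKernel_nonneg a b _), smul_eq_mul, mul_comm]
  have hsub : Set.Ioo (-a) b ⊆ integrableExpSet id μ := by
    intro t ht
    change Integrable (fun x => Real.exp (t * x)) μ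
    rw [hdens]
    simp only [exp_mul_logisticKernel]
    exact integrable_logisticKernel (by linarith [ht.1]) (by linarith [ht.2])
  have h0 : (0 : ℝ) ∈ interior (integrableExpSet id μ) :=
    mem_interior.2 ⟨_, hsub, isOpen_Ioo, by simpa, hb⟩
  have hmgf : mgf id μ =ᶠ[nhds 0] fun t => beta (a + t) (b - t) := by
    filter_upwards [isOpen_Ioo.mem_nhds (show (0 : ℝ) ∈ Set.Ioo (-a) b from ⟨by simpa, hb⟩)]
      with t ht
    rw [mgf, hval]
    simp only [id, exp_mul_logisticKernel]
    exact integral_logisticKernel (by linarith [ht.1]) (by linarith [ht.2])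
  refine ⟨(hdens id).1 (integrable_of_mem_interior_integrableExpSet h0), ?_⟩
  have hd := (hasDerivAt_mgf h0).unique ((hasDerivAt_beta_shift ha hb).congr_of_eventuallyEq hmgf)
  rw [← hd, hval]
  simp

/-- For `n ≥ 2`, `y ↦ y·f(y)` is integrable for the centered Logistic-Beta
density `f` and `∫ y·f(y) dy = -ωₙ` where `ωₙ = (1/n)(ψ((n-1)/2) - ψ(1/2))`. -/
theorem stmt7 (n : ℕ) (hn : 2 ≤ n) :
    Integrable (fun y : ℝ => y * logisticBetaDensity n y) ∧
    ∫ y : ℝ, y * logisticBetaDensity n y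
      = -((1 / (n : ℝ)) * (digammaFn (((n : ℝ) - 1) / 2) - digammaFn (1 / 2))) := by
  have hn' : (2 : ℝ) ≤ n := by exact_mod_cast hn
  have hn0 : (n : ℝ) ≠ 0 := by linarith
  have ha : (0 : ℝ) < 1 / 2 := by norm_num
  have hb : 0 < ((n : ℝ) - 1) / 2 := by linarith
  have hB := ProbabilityTheory.beta_pos ha hb
  obtain ⟨hI, hV⟩ := moment_logisticKernel ha hb
  set B := ProbabilityTheory.beta (1 / 2) (((n : ℝ) - 1) / 2) with hBdef
  have hab : (1 : ℝ) / 2 + ((n : ℝ) - 1) / 2 = n / 2 := by ring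
  have hc : Real.Gamma ((n : ℝ) / 2) / (Real.Gamma (1 / 2) * Real.Gamma (((n : ℝ) - 1) / 2))
      = B⁻¹ := by
    rw [hBdef, ProbabilityTheory.beta, hab, inv_div]
  have hf : (fun y : ℝ => y * logisticBetaDensity n y)
      = fun y => B⁻¹ * (fun x => x * logisticKernel (1 / 2) (((n : ℝ) - 1) / 2) x) (n * y) := by
    funext y
    simp only [logisticBetaDensity, logisticKernel, hc, hab]
    rw [show (1 : ℝ) / 2 * (n * y) = n * y / 2 by ring]
    ring
  rw [hf]
  refine ⟨(hI.comp_mul_left' hn0).const_mul _, ?_⟩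
  rw [integral_const_mul, Measure.integral_comp_mul_left
    (fun x => x * logisticKernel (1 / 2) (((n : ℝ) - 1) / 2) x), hV,
    abs_of_pos (by positivity), smul_eq_mul]
  field_simp
  ring
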